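/- Fix 0 < λ < Λ < ∞. Then there exist a natural number N, unit vectors ζ₁, …, ζ_N ∈ 𝕆², each having at least one coordinate that is a real multiple of the unit 1 ∈ 𝕆 and with the list containing the vectors (1,0) and (0,1), and constants 0 < λ* < Λ* < ∞ depending only on λ and Λ, such that every octonionic Hermitian 2×2 matrix A = (α, β, q) whose spectrum (the two real roots of t² − (α+β)·t + det A) lies in [λ, Λ] can be written as A = Σ_{k=1}^{N} β_k·(ζ_k ⊗ ζ_k*) with all β_k ∈ [λ*, Λ*]. (Proposition 16.4.) -/

import Mathlib

noncomputable section

open scoped Quaternion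

/-- The octonions, realized as pairs of quaternions (Cayley–Dickson). -/
abbrev Oct : Type := ℍ[ℝ] × ℍ[ℝ]

/-- Octonionic multiplication: (x,y)·(w,z) = (xw − z̄y, zx + yw̄). -/
def omul (a b : Oct) : Oct :=
  (a.1 * b.1 - star b.2 * a.2, b.2 * a.1 + a.2 * star b.1)

/-- Octonionic conjugation. -/
def oconj (a : Oct) : Oct := (star a.1, -a.2)

/-- Real part of an octonion. -/
def oRe (a : Oct) : ℝ := a.1.re

/-- Squared norm |q|² = Re(q·q̄). -/
def onSq (a : Oct) : ℝ := oRe (omul a (oconj a))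

/-- Octonionic Hermitian 2×2 matrix: (α, β, q) represents [[α, q],[q̄, β]]. -/
abbrev Herm : Type := ℝ × ℝ × Oct

/-- Determinant of an octonionic Hermitian 2×2 matrix. -/
def detH (A : Herm) : ℝ := A.1 * A.2.1 - onSq A.2.2

/-- The quadratic form ξ ↦ Re(ξ*Aξ). -/
def qform (A : Herm) (ξ : Oct × Oct) : ℝ :=
  A.1 * onSq ξ.1 + A.2.1 * onSq ξ.2 + 2 * oRe (omul (oconj ξ.1) (omul A.2.2 ξ.2))

/-- Positive definiteness. -/
def PosDefH (A : Herm) : Prop := ∀ ξ : Oct × Oct, ξ ≠ 0 → 0 < qform A ξ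

/-- Nonnegative definiteness. -/
def NonnegDefH (A : Herm) : Prop := ∀ ξ : Oct × Oct, 0 ≤ qform A ξ

/-- Embedding of ℝ into the octonions. -/
def oR (r : ℝ) : Oct := ((r : ℍ[ℝ]), 0)

/-- The rank-one octonionic Hermitian matrix ζ ⊗ ζ* = (|ζ₁|², |ζ₂|², ζ₁·conj(ζ₂)). -/
def outerH (ζ : Oct × Oct) : Herm := (onSq ζ.1, onSq ζ.2, omul ζ.1 (oconj ζ.2))

/-- The unit vectors allowed in the decomposition. -/
def Good (z : Oct × Oct) : Prop :=
  onSq z.1 + onSq z.2 = 1 ∧ ((∃ r : ℝ, z.1 = oR r) ∨ (∃ r : ℝ, z.2 = oR r))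

/-- The closed cone generated by finitely many rank-one matrices. -/
def coneH (F : Finset (Oct × Oct)) : PointedCone ℝ Herm :=
  Submodule.span _ (outerH '' (F : Set (Oct × Oct)))

lemma onSq_eq (a : Oct) : onSq a = ‖a.1‖ ^ 2 + ‖a.2‖ ^ 2 := by
  have h : ∀ x : ℍ[ℝ], ‖x‖ ^ 2 = x.re ^ 2 + x.imI ^ 2 + x.imJ ^ 2 + x.imK ^ 2 := by
    intro x
    rw [sq, ← Quaternion.normSq_eq_norm_mul_self, Quaternion.normSq_def']
  rw [h, h]
  simp [onSq, oRe, omul, oconj]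
  ring

lemma onSq_smul (c : ℝ) (a : Oct) : onSq (c • a) = c ^ 2 * onSq a := by
  simp only [onSq_eq, Prod.smul_fst, Prod.smul_snd, norm_smul, mul_pow, Real.norm_eq_abs, sq_abs]
  ring

lemma onSq_oR (r : ℝ) : onSq (oR r) = r ^ 2 := by
  simp [onSq_eq, oR]

lemma onSq_nonneg (a : Oct) : 0 ≤ onSq a := by
  rw [onSq_eq]; positivity

lemma continuous_onSq : Continuous onSq := by
  have : onSq = fun a : Oct => ‖a.1‖ ^ 2 + ‖a.2‖ ^ 2 := funext onSq_eq
  rw [this]; fun_prop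

lemma continuous_detH : Continuous detH := by
  have := continuous_onSq
  unfold detH
  fun_prop

lemma omul_oR (c r : ℝ) (q : Oct) : omul (c • q) (oconj (oR r)) = (c * r) • q := by
  obtain ⟨x, y⟩ := q
  ext <;> simp [omul, oconj, oR] <;> ring

lemma good_e1 : Good (oR 1, 0) := by
  refine ⟨?_, Or.inl ⟨1, rfl⟩⟩
  simp [onSq_eq, oR]

lemma good_e2 : Good (0, oR 1) := by
  refine ⟨?_, Or.inr ⟨1, rfl⟩⟩
  simp [onSq_eq, oR]

lemma coneH_mono {F G : Finset (Oct × Oct)} (h : F ⊆ G) : coneH F ≤ coneH G :=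
  Submodule.span_mono (Set.image_mono (by exact_mod_cast h))

lemma outerH_mem {F : Finset (Oct × Oct)} {z : Oct × Oct} (h : z ∈ F) : outerH z ∈ coneH F :=
  Submodule.subset_span ⟨z, by exact_mod_cast h, rfl⟩

open Classical in
/-- Every positive definite matrix is in such a cone. -/
lemma exists_cone (B : Herm) (h1 : 0 < B.2.1) (h2 : 0 < detH B) :
    ∃ F : Finset (Oct × Oct), (∀ z ∈ F, Good z) ∧ B ∈ coneH F := by
  obtain ⟨a, b, q⟩ := B
  simp only [detH] at h1 h2
  have hq := onSq_nonneg q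
  set s := onSq q with hs
  set d := s + b ^ 2 with hd
  have hdpos : 0 < d := by positivity
  set c := (Real.sqrt d)⁻¹ with hc
  have hc2 : c ^ 2 = d⁻¹ := by rw [hc, inv_pow, Real.sq_sqrt hdpos.le]
  set z : Oct × Oct := (c • q, oR (b * c)) with hz
  have hgood : Good z := by
    refine ⟨?_, Or.inr ⟨b * c, rfl⟩⟩
    simp only [hz, onSq_smul, onSq_oR, mul_pow, hc2, ← hs]
    field_simp
    rw [hd]
  refine ⟨{z, (oR 1, 0)}, ?_, ?_⟩
  · intro w hw
    simp only [Finset.mem_insert, Finset.mem_singleton] at hw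
    rcases hw with rfl | rfl
    · exact hgood
    · exact good_e1
  · have e : ((a, b, q) : Herm) = (d / b) • outerH z + (a - s / b) • outerH (oR 1, 0) := by
      have e1 : outerH z = (c ^ 2 * s, b ^ 2 * c ^ 2, (b * c ^ 2) • q) := by
        simp only [outerH, hz, onSq_smul, onSq_oR, omul_oR, ← hs, mul_pow]
        congr 3
        ring
      have e2 : outerH (oR 1, 0) = (1, 0, 0) := by
        simp only [outerH, onSq_oR]
        simp [onSq_eq, omul, oconj]
      rw [e1, e2, hc2]
      refine Prod.ext ?_ (Prod.ext ?_ ?_)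
      · simp; field_simp; ring
      · simp; field_simp
      · simp only [Prod.snd_add, Prod.smul_snd, smul_zero, add_zero, smul_smul]
        rw [show d / b * (b * d⁻¹) = 1 by field_simp, one_smul]
    rw [e]
    refine add_mem (PointedCone.smul_mem _ (by positivity) (outerH_mem (by simp)))
      (PointedCone.smul_mem _ ?_ (outerH_mem (by simp)))
    rw [sub_nonneg, div_le_iff₀ h1]
    linarith

open Classical in
lemma exists_cone_nhds (A : Herm) (h1 : 0 < A.2.1) (h2 : 0 < detH A) :
    ∃ F : Finset (Oct × Oct), (∀ z ∈ F, Good z) ∧ (coneH F : Set Herm) ∈ nhds A := by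
  have hopen : IsOpen {B : Herm | 0 < B.2.1 ∧ 0 < detH B} :=
    IsOpen.inter (isOpen_lt (f := fun _ : Herm => (0 : ℝ)) (g := fun B : Herm => B.2.1)
      continuous_const (by fun_prop)) (isOpen_lt continuous_const continuous_detH)
  obtain ⟨b, hb1, hb2⟩ := exists_mem_interior_convexHull_affineBasis (hopen.mem_nhds ⟨h1, h2⟩)
  have hb : ∀ i, 0 < (b i).2.1 ∧ 0 < detH (b i) := fun i =>
    hb2 (subset_convexHull ℝ _ ⟨i, rfl⟩)
  choose F hF hF' using fun i => exists_cone (b i) (hb i).1 (hb i).2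
  refine ⟨Finset.univ.biUnion F, ?_, ?_⟩
  · intro z hz
    simp only [Finset.mem_biUnion, Finset.mem_univ, true_and] at hz
    obtain ⟨i, hi⟩ := hz
    exact hF i z hi
  · refine Filter.mem_of_superset (mem_interior_iff_mem_nhds.1 hb1) ?_
    refine convexHull_min ?_ (PointedCone.convex _)
    rintro _ ⟨i, rfl⟩
    exact coneH_mono (Finset.subset_biUnion_of_mem F (Finset.mem_univ i)) (hF' i)

/-- Compact set containing all matrices with spectrum in [lam, Lam]. -/
def KH (lam Lam : ℝ) : Set Herm :=
  {A | lam ^ 2 ≤ detH A ∧ 2 * lam ≤ A.1 + A.2.1 ∧ A.1 + A.2.1 ≤ 2 * Lam}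

lemma KH_pos {lam Lam : ℝ} (hlam : 0 < lam) {A : Herm} (hA : A ∈ KH lam Lam) :
    0 < A.1 ∧ 0 < A.2.1 ∧ 0 < detH A := by
  obtain ⟨h1, h2, h3⟩ := hA
  have hd : 0 < detH A := lt_of_lt_of_le (by positivity) h1
  have hq := onSq_nonneg A.2.2
  have hp : 0 < A.1 * A.2.1 := by unfold detH at hd; linarith
  rcases mul_pos_iff.1 hp with h | h
  · exact ⟨h.1, h.2, hd⟩
  · linarith

lemma KH_compact {lam Lam : ℝ} (hlam : 0 < lam) : IsCompact (KH lam Lam) := by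
  apply Metric.isCompact_of_isClosed_isBounded
  · exact (isClosed_le continuous_const continuous_detH).inter
      ((isClosed_le (f := fun _ : Herm => 2 * lam) (g := fun B : Herm => B.1 + B.2.1)
        continuous_const (by fun_prop)).inter
        (isClosed_le (f := fun B : Herm => B.1 + B.2.1) (by fun_prop) continuous_const))
  · refine isBounded_iff_forall_norm_le.2 ⟨2 * Lam, fun A hA => ?_⟩
    obtain ⟨p1, p2, p3⟩ := KH_pos hlam hA
    obtain ⟨h1, h2, h3⟩ := hA
    have hL : 0 ≤ 2 * Lam := by linarith
    have hq : ‖A.2.2.1‖ ^ 2 + ‖A.2.2.2‖ ^ 2 < (2 * Lam) ^ 2 := by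
      rw [← onSq_eq]
      unfold detH at p3
      nlinarith
    refine norm_prod_le_iff.2 ⟨?_, norm_prod_le_iff.2 ⟨?_, norm_prod_le_iff.2 ⟨?_, ?_⟩⟩⟩
    · rw [Real.norm_eq_abs, abs_of_pos p1]; linarith
    · rw [Real.norm_eq_abs, abs_of_pos p2]; linarith
    · exact abs_le_of_sq_le_sq' (by nlinarith [sq_nonneg ‖A.2.2.2‖]) hL |>.2
    · exact abs_le_of_sq_le_sq' (by nlinarith [sq_nonneg ‖A.2.2.1‖]) hL |>.2

lemma mem_KH {lam Lam : ℝ} (hlam : 0 < lam) (A : Herm)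
    (h : ∀ t : ℝ, t ^ 2 - (A.1 + A.2.1) * t + detH A = 0 → t ∈ Set.Icc lam Lam) :
    A ∈ KH lam Lam := by
  have hq := onSq_nonneg A.2.2
  have hD : 0 ≤ (A.1 + A.2.1) ^ 2 - 4 * detH A := by
    unfold detH
    nlinarith [sq_nonneg (A.1 - A.2.1)]
  set S := A.1 + A.2.1 with hS
  set r := Real.sqrt (S ^ 2 - 4 * detH A) with hr
  have hr2 : r ^ 2 = S ^ 2 - 4 * detH A := Real.sq_sqrt hD
  obtain ⟨a1, a2⟩ := h ((S + r) / 2) (by nlinarith)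
  obtain ⟨b1, b2⟩ := h ((S - r) / 2) (by nlinarith)
  refine ⟨?_, by linarith, by linarith⟩
  have : detH A = ((S + r) / 2) * ((S - r) / 2) := by nlinarith
  rw [this]
  nlinarith

open Classical in
lemma exists_cone_KH {lam Lam : ℝ} (hlam : 0 < lam) :
    ∃ F : Finset (Oct × Oct), (∀ z ∈ F, Good z) ∧
      ∀ A ∈ KH lam Lam, (coneH F : Set Herm) ∈ nhds A := by
  refine (KH_compact (Lam := Lam) hlam).induction_on
    (p := fun s => ∃ F : Finset (Oct × Oct), (∀ z ∈ F, Good z) ∧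
      ∀ A ∈ s, (coneH F : Set Herm) ∈ nhds A) ?_ ?_ ?_ ?_
  · exact ⟨∅, by simp, by simp⟩
  · rintro s t hst ⟨F, h1, h2⟩
    exact ⟨F, h1, fun A hA => h2 A (hst hA)⟩
  · rintro s t ⟨F, h1, h2⟩ ⟨G, g1, g2⟩
    refine ⟨F ∪ G, ?_, ?_⟩
    · intro z hz
      rcases Finset.mem_union.1 hz with hz | hz
      · exact h1 z hz
      · exact g1 z hz
    · rintro A (hA | hA)
      · exact Filter.mem_of_superset (h2 A hA) (coneH_mono Finset.subset_union_left)
      · exact Filter.mem_of_superset (g2 A hA) (coneH_mono Finset.subset_union_right)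
  · intro A hA
    obtain ⟨-, p2, p3⟩ := KH_pos hlam hA
    obtain ⟨F, h1, h2⟩ := exists_cone_nhds A p2 p3
    exact ⟨interior (coneH F : Set Herm),
      mem_nhdsWithin_of_mem_nhds (interior_mem_nhds.2 h2), F, h1,
      fun B hB => mem_interior_iff_mem_nhds.1 hB⟩

/-- Proposition 16.4: given 0 < λ < Λ there are finitely many unit vectors
ζ₁, …, ζ_N ∈ 𝕆², each with at least one real coordinate and containing (1,0), (0,1),
and 0 < λ* < Λ* depending only on λ, Λ, such that every octonionic Hermitian matrix
with spectrum in [λ, Λ] is Σ_k β_k·(ζ_k ⊗ ζ_k*) with all β_k ∈ [λ*, Λ*]. -/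
theorem rank_one_decomposition (lam Lam : ℝ) (hlam : 0 < lam) (hLam : lam < Lam) :
    ∃ (N : ℕ) (ζ : Fin N → Oct × Oct) (lamS LamS : ℝ),
      0 < lamS ∧ lamS < LamS ∧
      (∀ k, onSq (ζ k).1 + onSq (ζ k).2 = 1) ∧
      (∀ k, (∃ r : ℝ, (ζ k).1 = oR r) ∨ (∃ r : ℝ, (ζ k).2 = oR r)) ∧
      (∃ k, ζ k = (oR 1, 0)) ∧ (∃ k, ζ k = (0, oR 1)) ∧
      (∀ A : Herm,
        (∀ t : ℝ, t ^ 2 - (A.1 + A.2.1) * t + detH A = 0 → t ∈ Set.Icc lam Lam) →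
        ∃ β : Fin N → ℝ, (∀ k, β k ∈ Set.Icc lamS LamS) ∧
          A = ∑ k, β k • outerH (ζ k)) := by
  classical
  obtain ⟨F₀, hF₀, hK₀⟩ := exists_cone_KH (Lam := Lam) hlam
  set F : Finset (Oct × Oct) := insert (oR 1, 0) (insert (0, oR 1) F₀) with hFdef
  have hsub : F₀ ⊆ F := fun z hz => by simp [hFdef, hz]
  have hF : ∀ z ∈ F, Good z := by
    intro z hz
    simp only [hFdef, Finset.mem_insert] at hz
    rcases hz with rfl | rfl | hz
    · exact good_e1
    · exact good_e2
    · exact hF₀ z hz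
  have hK : KH lam Lam ⊆ interior (coneH F : Set Herm) := fun A hA =>
    mem_interior_iff_mem_nhds.2 (Filter.mem_of_superset (hK₀ A hA) (coneH_mono hsub))
  obtain ⟨δ, hδ, hthick⟩ :=
    (KH_compact (Lam := Lam) hlam).exists_thickening_subset_open isOpen_interior hK
  set M : Herm := ∑ z ∈ F, outerH z with hM
  set ε : ℝ := δ / (‖M‖ + 1) with hε
  have hMpos : 0 < ‖M‖ + 1 := by positivity
  have hεpos : 0 < ε := by positivity
  have hεM : ‖ε • M‖ < δ := by
    rw [norm_smul, Real.norm_eq_abs, abs_of_pos hεpos, hε, div_mul_eq_mul_div, div_lt_iff₀ hMpos]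
    nlinarith
  let ζ : Fin F.card → Oct × Oct := fun k => (F.equivFin.symm k : Oct × Oct)
  have hζ : ∀ k, ζ k ∈ F := fun k => (F.equivFin.symm k).2
  have hζs : ∀ z ∈ F, ∃ k, ζ k = z := fun z hz => ⟨F.equivFin ⟨z, hz⟩, by simp [ζ]⟩
  have hsum : ∀ f : Oct × Oct → Herm, ∑ k, f (ζ k) = ∑ z ∈ F, f z := by
    intro f
    rw [← Finset.sum_coe_sort F f]
    exact Equiv.sum_comp F.equivFin.symm (fun z : F => f z)
  refine ⟨F.card, ζ, ε, 2 * Lam + ε, hεpos, by linarith, fun k => (hF _ (hζ k)).1,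
    fun k => (hF _ (hζ k)).2, hζs _ (by simp [hFdef]), hζs _ (by simp [hFdef]), ?_⟩
  intro A hA
  have hAK := mem_KH hlam A hA
  have hmem : A - ε • M ∈ (coneH F : Set Herm) := by
    apply interior_subset
    apply hthick
    refine Metric.mem_thickening_iff.2 ⟨A, hAK, ?_⟩
    rw [dist_eq_norm, sub_sub_cancel_left, norm_neg]
    exact hεM
  obtain ⟨c, hc⟩ := Submodule.mem_span_image_finset_iff_exists_fun' _ |>.1 hmem
  have hAsum : A = ∑ k, ((c (ζ k) : ℝ) + ε) • outerH (ζ k) := by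
    rw [hsum (fun z => ((c z : ℝ) + ε) • outerH z)]
    simp only [add_smul, Finset.sum_add_distrib, ← Finset.smul_sum]
    rw [← hM]
    have : ∑ z ∈ F, (c z : ℝ) • outerH z = A - ε • M := hc
    rw [this, sub_add_cancel]
  refine ⟨fun k => (c (ζ k) : ℝ) + ε, fun k => ⟨by have := (c (ζ k)).2; linarith, ?_⟩, hAsum⟩
  have htr : A.1 + A.2.1 = ∑ k, ((c (ζ k) : ℝ) + ε) := by
    have e1 : A.1 = ∑ k, ((c (ζ k) : ℝ) + ε) * onSq (ζ k).1 := by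
      have := congrArg Prod.fst hAsum
      simpa [Prod.fst_sum, outerH] using this
    have e2 : A.2.1 = ∑ k, ((c (ζ k) : ℝ) + ε) * onSq (ζ k).2 := by
      have := congrArg (fun B : Herm => B.2.1) hAsum
      simpa [Prod.fst_sum, Prod.snd_sum, outerH] using this
    rw [e1, e2, ← Finset.sum_add_distrib]
    refine Finset.sum_congr rfl fun k _ => ?_
    rw [← mul_add, (hF _ (hζ k)).1, mul_one]
  have hle : (c (ζ k) : ℝ) + ε ≤ ∑ k, ((c (ζ k) : ℝ) + ε) :=
    Finset.single_le_sum (f := fun k => (c (ζ k) : ℝ) + ε)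
      (fun j _ => add_nonneg (c (ζ j)).2 hεpos.le) (Finset.mem_univ k)
  have := hAK.2.2
  linarith
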